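/- (Renormalization estimate for the collision integral.) For every r > 0 there exists a constant C_r > 0 with the following property: for every continuous, strictly positive, rapidly decaying f : ℝ³ → ℝ with ln f of polynomial growth, ∫_{|v| ≤ r} |C(f)(v)| / √(1 + f(v)) dv ≤ C_r ( −∫_{ℝ³} C(f)(v) ln f(v) dv + ∫_{ℝ³} (1 + |v|²) f(v) dv ), where C is the hard-sphere collision integral (note that the first term on the right-hand side, the entropy production, is nonnegative). -/

import Mathlib

/-!
Write `a = f(v)f(v*)`, `b = f(v')f(v*')`. From `b - a = (√b - √a)² + 2√a(√b - √a)`,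
`√a ≤ √(1 + f(v)) √f(v*)` and `2(√b - √a)² ≤ (b - a)(ln b - ln a)` one gets the pointwise bound
`|b - a| ≤ √(1 + f(v)) ((b - a)(ln b - ln a) + f(v*))` (`abs_sub_le_renorm`). Multiplied by the
kernel, which is at most `(r + 1)(1 + |v*|²)` for `|v| ≤ r`, and integrated over `|v| ≤ r`, `v*`
and `ω`, the first term is at most the total dissipation and the second is a constant times mass
plus energy.

The total dissipation `∫ (b - a)(ln b - ln a)|(v−v*)·ω|` equals `-4 ∫ C(f) ln f`
(`dissip_integrable_and_integral`), by invariance of the measure `dv dv* dω` under exchange of the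
particles and under the collision map, which at fixed `ω` is a linear involution. The use of
Fubini's theorem is justified by `integrable_collIntegrand_mul_log`: conservation of energy
transfers the rapid decay of `f` from `(v', v*')` to `(v, v*)`.
-/

open MeasureTheory
open scoped RealInnerProductSpace

noncomputable section

/-- The post-collision velocity `v' = v − ((v−v*)·ω)ω`. -/
def vPost (v vs ω : EuclideanSpace ℝ (Fin 3)) : EuclideanSpace ℝ (Fin 3) :=
  v - ⟪v - vs, ω⟫ • ω

/-- The post-collision velocity `v*' = v* + ((v−v*)·ω)ω`. -/
def vsPost (v vs ω : EuclideanSpace ℝ (Fin 3)) : EuclideanSpace ℝ (Fin 3) :=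
  vs + ⟪v - vs, ω⟫ • ω

/-- The surface measure on the unit sphere `S² ⊂ ℝ³`. -/
def sphereMeasure : Measure (Metric.sphere (0 : EuclideanSpace ℝ (Fin 3)) 1) :=
  (volume : Measure (EuclideanSpace ℝ (Fin 3))).toSphere

/-- The (dimensionless, hard-sphere) Boltzmann collision integral
`C(f)(v) = ∫_{ℝ³}∫_{S²} (f(v')f(v*') − f(v)f(v*)) |(v−v*)·ω| dω dv*`. -/
def collisionIntegral (f : EuclideanSpace ℝ (Fin 3) → ℝ)
    (v : EuclideanSpace ℝ (Fin 3)) : ℝ :=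
  ∫ vs, (∫ ω : Metric.sphere (0 : EuclideanSpace ℝ (Fin 3)) 1,
    (f (vPost v vs ω) * f (vsPost v vs ω) - f v * f vs) *
      |⟪v - vs, (ω : EuclideanSpace ℝ (Fin 3))⟫| ∂sphereMeasure)

/-- A function on `ℝ³` is rapidly decaying if `sup_v (1+|v|)^k f(v) < ∞` for every `k ∈ ℕ`. -/
def RapidlyDecaying (f : EuclideanSpace ℝ (Fin 3) → ℝ) : Prop :=
  ∀ k : ℕ, ∃ C : ℝ, ∀ v, (1 + ‖v‖) ^ k * f v ≤ C

/-- `ln f` has polynomial growth: `|ln f(v)| ≤ C(1+|v|)^m` for some constants `C, m`. -/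
def LogPolyGrowth (f : EuclideanSpace ℝ (Fin 3) → ℝ) : Prop :=
  ∃ (C : ℝ) (m : ℕ), ∀ v, |Real.log (f v)| ≤ C * (1 + ‖v‖) ^ m

/-! ### Elementary inequalities -/

/-- Entropy dissipation controls the Hellinger-type defect `(q - p)²`. -/
lemma sq_sub_le_log {p q : ℝ} (hp : 0 < p) (hq : 0 < q) :
    (q - p) ^ 2 ≤ (q ^ 2 - p ^ 2) * (Real.log q - Real.log p) := by
  wlog h : p ≤ q generalizing p q with H
  · have := H hq hp (le_of_not_ge h)
    nlinarith
  have h1 : 1 - p / q ≤ Real.log q - Real.log p := by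
    have := Real.one_sub_inv_le_log_of_pos (div_pos hq hp)
    rwa [inv_div, Real.log_div hq.ne' hp.ne'] at this
  have h2 : (q - p) ≤ (q + p) * (1 - p / q) := by
    have : (q + p) * (1 - p / q) - (q - p) = (q - p) * (p / q) := by
      field_simp; ring
    have h3 : 0 ≤ (q - p) * (p / q) := mul_nonneg (by linarith) (by positivity)
    linarith
  have h4 : (q + p) * (1 - p / q) ≤ (q + p) * (Real.log q - Real.log p) :=
    mul_le_mul_of_nonneg_left h1 (by positivity)
  nlinarith [mul_le_mul_of_nonneg_left (h2.trans h4) (sub_nonneg.2 h)]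

/-- The pointwise renormalization inequality: with `a = x y` the product before and `b` the
product after the collision, `|b - a|` is bounded by `√(1 + x)` times dissipation plus `y`. -/
lemma abs_sub_le_renorm {x y b : ℝ} (hx : 0 < x) (hy : 0 < y) (hb : 0 < b) :
    |b - x * y| ≤ √(1 + x) * ((b - x * y) * (Real.log b - Real.log (x * y)) + y) := by
  set s := √(1 + x) with hs
  have hs1 : 1 ≤ s := Real.one_le_sqrt.2 (by linarith)
  have hxs : √x ≤ s := Real.sqrt_le_sqrt (by linarith)
  set p := √(x * y) with hp
  set q := √b with hq
  have hp0 : 0 < p := Real.sqrt_pos.2 (by positivity)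
  have hq0 : 0 < q := Real.sqrt_pos.2 hb
  have hp2 : x * y = p ^ 2 := (Real.sq_sqrt (by positivity)).symm
  have hq2 : b = q ^ 2 := (Real.sq_sqrt hb.le).symm
  have hps : p ≤ s * √y := by
    rw [hp, Real.sqrt_mul hx.le]
    exact mul_le_mul_of_nonneg_right hxs (Real.sqrt_nonneg _)
  have hy2 : √y ^ 2 = y := Real.sq_sqrt hy.le
  have key := sq_sub_le_log hp0 hq0
  have hl : (b - x * y) * (Real.log b - Real.log (x * y))
      = 2 * ((q ^ 2 - p ^ 2) * (Real.log q - Real.log p)) := by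
    rw [hp2, hq2, Real.log_pow, Real.log_pow]; push_cast; ring
  have h1 : |b - x * y| ≤ (q - p) ^ 2 + 2 * p * |q - p| := by
    have : b - x * y = (q - p) ^ 2 + 2 * p * (q - p) := by rw [hp2, hq2]; ring
    rw [this]
    refine (abs_add_le _ _).trans (le_of_eq ?_)
    rw [abs_of_nonneg (sq_nonneg _), abs_mul, abs_of_nonneg (by positivity : 0 ≤ 2 * p)]
  have h2 : 2 * p * |q - p| ≤ s * (y + (q - p) ^ 2) := by
    have h3 : 2 * √y * |q - p| ≤ y + (q - p) ^ 2 := by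
      have := two_mul_le_add_sq (√y) |q - p|
      rwa [hy2, sq_abs] at this
    have := mul_le_mul_of_nonneg_right hps (abs_nonneg (q - p))
    nlinarith
  have h4 : (q - p) ^ 2 ≤ s * (q - p) ^ 2 := le_mul_of_one_le_left (sq_nonneg _) hs1
  rw [hl]
  nlinarith [mul_le_mul_of_nonneg_left key (by linarith : 0 ≤ s)]

/-- Conservation of energy `a² + b² = c² + d²` makes the weights `(1 + |v|)(1 + |v*|)` before and
after a collision polynomially comparable. -/
lemma weight_le_of_energy {a b c d : ℝ} (hc : 0 ≤ c) (hd : 0 ≤ d)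
    (h : a ^ 2 + b ^ 2 = c ^ 2 + d ^ 2) :
    (1 + a) * (1 + b) ≤ 2 * ((1 + c) * (1 + d)) ^ 2 := by
  have h1 : (1 + a) * (1 + b) ≤ 2 * (1 + a ^ 2 + b ^ 2) := by
    nlinarith [sq_nonneg (a - b), sq_nonneg (a - 1), sq_nonneg (b - 1)]
  have h2 : 1 + c ^ 2 + d ^ 2 ≤ ((1 + c) * (1 + d)) ^ 2 := by
    have : ((1 + c) * (1 + d)) ^ 2 - (1 + c ^ 2 + d ^ 2)
        = 2 * c + 2 * d + 4 * c * d + 2 * c * d * (c + d) + (c * d) ^ 2 := by ring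
    have h3 : 0 ≤ 2 * c + 2 * d + 4 * c * d + 2 * c * d * (c + d) + (c * d) ^ 2 := by positivity
    linarith
  linarith

/-! ### The collision map -/

local notation "E3" => EuclideanSpace ℝ (Fin 3)
local notation "S2" => Metric.sphere (0 : EuclideanSpace ℝ (Fin 3)) 1

lemma inner_post (v vs : E3) (ω : S2) :
    ⟪vPost v vs ω - vsPost v vs ω, (ω : E3)⟫ = -⟪v - vs, (ω : E3)⟫ := by
  have h : ⟪(ω : E3), (ω : E3)⟫ = 1 := by
    rw [real_inner_self_eq_norm_sq, norm_eq_of_mem_sphere]; norm_num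
  simp only [vPost, vsPost, inner_sub_left, inner_add_left, real_inner_smul_left, h]
  ring

lemma vPost_post (v vs : E3) (ω : S2) :
    vPost (vPost v vs ω) (vsPost v vs ω) ω = v := by
  rw [vPost, inner_post, vPost]; module

lemma vsPost_post (v vs : E3) (ω : S2) :
    vsPost (vPost v vs ω) (vsPost v vs ω) ω = vs := by
  rw [vsPost, inner_post, vsPost]; module

lemma vPost_swap (v vs : E3) (ω : E3) : vPost vs v ω = vsPost v vs ω := by
  rw [vPost, vsPost, ← neg_sub v vs, inner_neg_left]; module

lemma vsPost_swap (v vs : E3) (ω : E3) : vsPost vs v ω = vPost v vs ω := by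
  rw [vPost, vsPost, ← neg_sub v vs, inner_neg_left]; module

lemma energy_post (v vs : E3) (ω : S2) :
    ‖v‖ ^ 2 + ‖vs‖ ^ 2 = ‖vPost v vs ω‖ ^ 2 + ‖vsPost v vs ω‖ ^ 2 := by
  have h : ‖(ω : E3)‖ = 1 := norm_eq_of_mem_sphere ω
  rw [vPost, vsPost, norm_sub_sq_real, norm_add_sq_real, norm_smul, h, real_inner_smul_right,
    real_inner_smul_right, inner_sub_left, Real.norm_eq_abs, mul_one, sq_abs]
  ring

/-- The phase space `(ℝ³ × ℝ³) × S²` of collisions carries this product measure. -/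
def collMeasure : Measure ((E3 × E3) × S2) :=
  ((volume : Measure E3).prod (volume : Measure E3)).prod sphereMeasure

instance : IsFiniteMeasure sphereMeasure := by unfold sphereMeasure; infer_instance

/-- The collision `(v, v*) ↦ (v', v*')` at fixed `ω`, as a linear map. -/
def collLin (ω : E3) : (E3 × E3) →ₗ[ℝ] (E3 × E3) where
  toFun p := (vPost p.1 p.2 ω, vsPost p.1 p.2 ω)
  map_add' p q := by
    ext1 <;> simp only [vPost, vsPost, Prod.fst_add, Prod.snd_add, inner_sub_left,
      inner_add_left] <;> module
  map_smul' c p := by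
    ext1 <;> simp only [vPost, vsPost, Prod.smul_fst, Prod.smul_snd, inner_sub_left,
      real_inner_smul_left, RingHom.id_apply] <;> module

/-- At fixed `ω` the collision is a linear involution, so its determinant is `±1`. -/
lemma map_collLin (ω : S2) :
    Measure.map (collLin ω) ((volume : Measure E3).prod (volume : Measure E3))
      = (volume : Measure E3).prod (volume : Measure E3) := by
  have hinv : collLin ω ∘ₗ collLin ω = LinearMap.id := by
    apply LinearMap.ext
    rintro ⟨v, vs⟩
    exact Prod.ext (vPost_post v vs ω) (vsPost_post v vs ω)
  have hdet : LinearMap.det (collLin (ω : E3)) * LinearMap.det (collLin (ω : E3)) = 1 := by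
    rw [← LinearMap.det_comp, hinv, LinearMap.det_id]
  have habs : |(LinearMap.det (collLin (ω : E3)))⁻¹| = 1 := by
    rcases mul_self_eq_one_iff.1 hdet with h | h <;> rw [h] <;> norm_num
  rw [Measure.map_linearMap_addHaar_eq_smul_addHaar _ (left_ne_zero_of_mul_eq_one hdet), habs]
  simp

/-- The collision map on phase space. -/
def collMap (z : (E3 × E3) × S2) : (E3 × E3) × S2 :=
  ((vPost z.1.1 z.1.2 z.2, vsPost z.1.1 z.1.2 z.2), z.2)

/-- Exchange of the two particles on phase space. -/
def swapMap (z : (E3 × E3) × S2) : (E3 × E3) × S2 := (z.1.swap, z.2)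

lemma continuous_collMap : Continuous collMap := by
  unfold collMap vPost vsPost; fun_prop

lemma measurePreserving_collMap : MeasurePreserving collMap collMeasure collMeasure := by
  have h : MeasurePreserving (fun z : S2 × (E3 × E3) => (z.1, collLin z.1 z.2))
      (sphereMeasure.prod ((volume : Measure E3).prod (volume : Measure E3)))
      (sphereMeasure.prod ((volume : Measure E3).prod (volume : Measure E3))) := by
    refine (MeasurePreserving.id sphereMeasure).skew_product
      (g := fun (ω : S2) p => collLin ω p) ?_ (Filter.Eventually.of_forall map_collLin)
    refine Continuous.measurable ?_
    simp only [Function.uncurry_def, collLin, LinearMap.coe_mk, AddHom.coe_mk, vPost, vsPost]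
    fun_prop
  exact (Measure.measurePreserving_swap.comp h).comp Measure.measurePreserving_swap

lemma measurePreserving_swapMap : MeasurePreserving swapMap collMeasure collMeasure :=
  Measure.measurePreserving_swap.prod (MeasurePreserving.id _)

lemma integral_comp_mp {T : (E3 × E3) × S2 → (E3 × E3) × S2}
    (hT : MeasurePreserving T collMeasure collMeasure) {F : (E3 × E3) × S2 → ℝ}
    (hF : Continuous F) : ∫ z, F (T z) ∂collMeasure = ∫ z, F z ∂collMeasure := by
  conv_rhs => rw [← hT.map_eq]
  rw [integral_map hT.measurable.aemeasurable hF.aestronglyMeasurable]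

/-! ### The collision integrand: integrability and symmetries -/

/-- The integrand `(f(v')f(v*') − f(v)f(v*)) |(v−v*)·ω|` of the collision integral. -/
def collIntegrand (f : E3 → ℝ) (z : (E3 × E3) × S2) : ℝ :=
  (f (vPost z.1.1 z.1.2 z.2) * f (vsPost z.1.1 z.1.2 z.2) - f z.1.1 * f z.1.2) *
    |⟪z.1.1 - z.1.2, (z.2 : E3)⟫|

/-- The entropy dissipation density `(b − a)(ln b − ln a)|(v−v*)·ω|`, where `a = f(v)f(v*)` and
`b = f(v')f(v*')`. -/
def dissip (f : E3 → ℝ) (z : (E3 × E3) × S2) : ℝ :=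
  collIntegrand f z *
    (Real.log (f (vPost z.1.1 z.1.2 z.2) * f (vsPost z.1.1 z.1.2 z.2))
      - Real.log (f z.1.1 * f z.1.2))

lemma continuous_collIntegrand {f : E3 → ℝ} (hf : Continuous f) :
    Continuous (collIntegrand f) := by
  unfold collIntegrand vPost vsPost; fun_prop

lemma collIntegrand_collMap (f : E3 → ℝ) (z : (E3 × E3) × S2) :
    collIntegrand f (collMap z) = -collIntegrand f z := by
  simp only [collIntegrand, collMap, vPost_post, vsPost_post, inner_post, abs_neg]
  ring

lemma collIntegrand_swapMap (f : E3 → ℝ) (z : (E3 × E3) × S2) :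
    collIntegrand f (swapMap z) = collIntegrand f z := by
  simp only [collIntegrand, swapMap, Prod.fst_swap, Prod.snd_swap]
  rw [vPost_swap z.1.1 z.1.2, vsPost_swap z.1.1 z.1.2, ← neg_sub z.1.1 z.1.2, inner_neg_left, abs_neg]
  ring

lemma integrable_weight : Integrable (fun v : E3 => ((1 + ‖v‖) ^ 4)⁻¹) := by
  have h := integrable_one_add_norm (E := E3) (μ := volume) (r := 4)
    (by rw [finrank_euclideanSpace_fin]; norm_num)
  refine h.congr (Filter.Eventually.of_forall fun v => ?_)
  have : (0 : ℝ) ≤ 1 + ‖v‖ := by positivity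
  simp only [Real.rpow_neg this]
  norm_cast

lemma integrable_energy {f : E3 → ℝ} (hf : Continuous f) (hpos : ∀ v, 0 < f v)
    (hdec : RapidlyDecaying f) : Integrable (fun v => (1 + ‖v‖ ^ 2) * f v) := by
  obtain ⟨A, hA⟩ := hdec 6
  refine (integrable_weight.const_mul A).mono' (by fun_prop) (Filter.Eventually.of_forall fun v => ?_)
  have h1 : 0 < 1 + ‖v‖ := by positivity
  have h2 : 1 + ‖v‖ ^ 2 ≤ (1 + ‖v‖) ^ 2 := by nlinarith [norm_nonneg v]
  rw [Real.norm_of_nonneg (mul_nonneg (by positivity) (hpos v).le), ← div_eq_mul_inv,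
    le_div_iff₀ (by positivity)]
  refine le_trans ?_ (hA v)
  have := mul_le_mul_of_nonneg_right h2
    (mul_nonneg (hpos v).le (by positivity : 0 ≤ (1 + ‖v‖) ^ 4))
  nlinarith

lemma abs_inner_le_add_norm (v vs : E3) (ω : S2) :
    |⟪v - vs, (ω : E3)⟫| ≤ ‖v‖ + ‖vs‖ := by
  have h := abs_real_inner_le_norm (v - vs) (ω : E3)
  rw [norm_eq_of_mem_sphere, mul_one] at h
  exact h.trans (norm_sub_le _ _)

/-- Integrability over phase space of the integrand of `∫ C(f) ln f`: by rapid decay and the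
comparability of weights, it is dominated by a multiple of `((1 + |v|)(1 + |v*|))⁻⁴`. -/
lemma integrable_collIntegrand_mul_log {f : E3 → ℝ} (hf : Continuous f) (hpos : ∀ v, 0 < f v)
    (hdec : RapidlyDecaying f) (hlog : LogPolyGrowth f) :
    Integrable (fun z => collIntegrand f z * Real.log (f z.1.1)) collMeasure := by
  obtain ⟨L, m, hL⟩ := hlog
  obtain ⟨A, hA⟩ := hdec (m + 5)
  obtain ⟨B, hB⟩ := hdec (2 * (m + 5))
  have hA0 : 0 ≤ A := le_trans (mul_nonneg (by positivity) (hpos 0).le) (hA 0)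
  have hL0 : 0 ≤ L := by simpa using (abs_nonneg _).trans (hL 0)
  have hw : Integrable (fun z : (E3 × E3) × S2 =>
      ((A ^ 2 + 2 ^ (m + 5) * B ^ 2) * L) *
        ((((1 + ‖z.1.1‖) ^ 4)⁻¹ * ((1 + ‖z.1.2‖) ^ 4)⁻¹) * (1 : ℝ))) collMeasure :=
    ((integrable_weight.mul_prod integrable_weight).mul_prod
      (integrable_const (1 : ℝ))).const_mul _
  have hcl : Continuous (fun v => Real.log (f v)) := hf.log fun v => (hpos v).ne'
  refine hw.mono' (((continuous_collIntegrand hf).mul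
    (hcl.comp (by fun_prop : Continuous fun z : (E3 × E3) × S2 => z.1.1))).aestronglyMeasurable)
    (Filter.Eventually.of_forall ?_)
  rintro ⟨⟨v, vs⟩, ω⟩
  set v' := vPost v vs ω with hv'
  set vs' := vsPost v vs ω with hvs'
  set w := (1 + ‖v‖) * (1 + ‖vs‖) with hwdef
  set w' := (1 + ‖v'‖) * (1 + ‖vs'‖) with hwdef'
  have hw1 : 0 < w := by positivity
  have ha : w ^ (m + 5) * (f v * f vs) ≤ A ^ 2 := by
    have := mul_le_mul (hA v) (hA vs) (mul_nonneg (by positivity) (hpos vs).le) hA0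
    calc _ = _ := by rw [hwdef, mul_pow]; ring
      _ ≤ _ := this
      _ = _ := by ring
  have hB0 : 0 ≤ B := le_trans (mul_nonneg (by positivity) (hpos 0).le) (hB 0)
  have hb : w ^ (m + 5) * (f v' * f vs') ≤ 2 ^ (m + 5) * B ^ 2 := by
    have h1 := mul_le_mul (hB v') (hB vs') (mul_nonneg (by positivity) (hpos vs').le) hB0
    have h2 : w ≤ 2 * w' ^ 2 := weight_le_of_energy (norm_nonneg _) (norm_nonneg _)
      (energy_post v vs ω)
    have h3 : w ^ (m + 5) ≤ (2 * w' ^ 2) ^ (m + 5) := pow_le_pow_left₀ hw1.le h2 _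
    have h4 := mul_le_mul_of_nonneg_right h3 (mul_pos (hpos v') (hpos vs')).le
    refine h4.trans ?_
    calc _ = 2 ^ (m + 5) * ((1 + ‖v'‖) ^ (2 * (m + 5)) * f v' *
          ((1 + ‖vs'‖) ^ (2 * (m + 5)) * f vs')) := by
            rw [mul_pow, ← pow_mul, hwdef', mul_pow]; ring
      _ ≤ _ := mul_le_mul_of_nonneg_left (h1.trans (le_of_eq (by ring))) (by positivity)
  have hker : |⟪v - vs, (ω : E3)⟫| ≤ w := by
    refine (abs_inner_le_add_norm v vs ω).trans ?_
    rw [hwdef]; nlinarith [mul_nonneg (norm_nonneg v) (norm_nonneg vs)]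
  have hlg : |Real.log (f v)| ≤ L * w ^ m := by
    refine (hL v).trans (mul_le_mul_of_nonneg_left (pow_le_pow_left₀ (by positivity) ?_ _) hL0)
    rw [hwdef]; nlinarith [norm_nonneg v, norm_nonneg vs, mul_nonneg (norm_nonneg v) (norm_nonneg vs)]
  have hdiff : w ^ (m + 5) * |f v' * f vs' - f v * f vs| ≤ A ^ 2 + 2 ^ (m + 5) * B ^ 2 := by
    have h1 : |f v' * f vs' - f v * f vs| ≤ f v' * f vs' + f v * f vs := by
      have := mul_pos (hpos v') (hpos vs')
      have := mul_pos (hpos v) (hpos vs)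
      rw [abs_le]; constructor <;> linarith
    have := mul_le_mul_of_nonneg_left h1 (by positivity : 0 ≤ w ^ (m + 5))
    rw [mul_add] at this
    linarith
  have hgoal : |f v' * f vs' - f v * f vs| * |⟪v - vs, (ω : E3)⟫| * |Real.log (f v)|
      ≤ ((A ^ 2 + 2 ^ (m + 5) * B ^ 2) * L) * (w ^ 4)⁻¹ := by
    rw [← div_eq_mul_inv, le_div_iff₀ (by positivity)]
    calc _ ≤ |f v' * f vs' - f v * f vs| * w * (L * w ^ m) * w ^ 4 := by gcongr
      _ = (w ^ (m + 5) * |f v' * f vs' - f v * f vs|) * L := by ring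
      _ ≤ _ := mul_le_mul_of_nonneg_right hdiff hL0
  simp only [collIntegrand, norm_mul, Real.norm_eq_abs, abs_abs, mul_one]
  refine hgoal.trans (le_of_eq ?_)
  rw [hwdef, mul_pow, mul_inv]

/-- The H-theorem identity `∫ D = -4 ∫ C(f) ln f`, obtained from the two symmetries of the
collision measure. -/
lemma dissip_integrable_and_integral {f : E3 → ℝ} (hf : Continuous f) (hpos : ∀ v, 0 < f v)
    (hdec : RapidlyDecaying f) (hlog : LogPolyGrowth f) :
    Integrable (dissip f) collMeasure ∧
      ∫ z, dissip f z ∂collMeasure = -4 * ∫ v, collisionIntegral f v * Real.log (f v) := by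
  have hcl : Continuous (fun v => Real.log (f v)) := hf.log fun v => (hpos v).ne'
  set G : (E3 × E3) × S2 → ℝ := fun z => collIntegrand f z * Real.log (f z.1.1) with hG
  have hGc : Continuous G := (continuous_collIntegrand hf).mul
    (hcl.comp (by fun_prop : Continuous fun z : (E3 × E3) × S2 => z.1.1))
  have hGi : Integrable G collMeasure := integrable_collIntegrand_mul_log hf hpos hdec hlog
  have mS := measurePreserving_swapMap
  have mC := measurePreserving_collMap
  have hGS : Continuous (fun z => G (swapMap z)) :=
    hGc.comp (by unfold swapMap; fun_prop)
  have i2 : Integrable (fun z => G (swapMap z)) collMeasure := mS.integrable_comp_of_integrable hGi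
  have i3 : Integrable (fun z => G (collMap z)) collMeasure := mC.integrable_comp_of_integrable hGi
  have i4 : Integrable (fun z => G (swapMap (collMap z))) collMeasure :=
    mC.integrable_comp_of_integrable i2
  have i12 : Integrable (fun z => G z + G (swapMap z)) collMeasure := hGi.add i2
  have i34 : Integrable (fun z => G (collMap z) + G (swapMap (collMap z))) collMeasure :=
    i3.add i4
  have e2 := integral_comp_mp mS hGc
  have e3 := integral_comp_mp mC hGc
  have e4 := integral_comp_mp mC hGS
  have hD : dissip f = fun z =>
      -((G z + G (swapMap z)) + (G (collMap z) + G (swapMap (collMap z)))) := by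
    funext z
    simp only [hG, collIntegrand_swapMap, collIntegrand_collMap, dissip]
    rw [Real.log_mul (hpos _).ne' (hpos _).ne', Real.log_mul (hpos _).ne' (hpos _).ne']
    simp only [swapMap, collMap, Prod.fst_swap]
    ring
  refine ⟨by rw [hD]; exact (i12.add i34).neg, ?_⟩
  have hGint : ∫ z, G z ∂collMeasure = ∫ v, collisionIntegral f v * Real.log (f v) := by
    unfold collMeasure at hGi ⊢
    rw [integral_prod _ hGi, integral_prod _ hGi.integral_prod_left]
    refine integral_congr_ae (Filter.Eventually.of_forall fun v => ?_)
    simp only [hG, collisionIntegral, collIntegrand, integral_mul_const]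
  rw [hD, integral_neg, integral_add i12 i34, integral_add hGi i2,
    integral_add i3 i4, e2, e3, e4, e2, hGint]
  ring

lemma dissip_nonneg {f : E3 → ℝ} (hpos : ∀ v, 0 < f v) (z : (E3 × E3) × S2) :
    0 ≤ dissip f z := by
  have key : ∀ a b : ℝ, 0 < a → 0 < b → 0 ≤ (b - a) * (Real.log b - Real.log a) := by
    intro a b ha hb
    rcases le_total a b with h | h
    · exact mul_nonneg (sub_nonneg.2 h) (sub_nonneg.2 (Real.log_le_log ha h))
    · exact mul_nonneg_of_nonpos_of_nonpos (sub_nonpos.2 h)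
        (sub_nonpos.2 (Real.log_le_log hb h))
  rw [dissip, collIntegrand, mul_right_comm]
  exact mul_nonneg (key _ _ (mul_pos (hpos _) (hpos _)) (mul_pos (hpos _) (hpos _)))
    (abs_nonneg _)

/-- For `|v| ≤ r` the kernel `|(v−v*)·ω|` is at most `(r + 1)(1 + |v*|²)`, which turns the
remainder `f(v*)` of `abs_sub_le_renorm` into mass plus energy. -/
lemma abs_collIntegrand_le {f : E3 → ℝ} (hpos : ∀ v, 0 < f v) {r : ℝ} (hr : 0 < r)
    {v : E3} (hv : ‖v‖ ≤ r) (vs : E3) (ω : S2) :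
    |collIntegrand f ((v, vs), ω)| ≤ √(1 + f v) *
      (dissip f ((v, vs), ω) + (r + 1) * ((1 + ‖vs‖ ^ 2) * f vs)) := by
  have h := abs_sub_le_renorm (hpos v) (hpos vs)
    (mul_pos (hpos (vPost v vs ω)) (hpos (vsPost v vs ω)))
  have hk : |⟪v - vs, (ω : E3)⟫| ≤ (r + 1) * (1 + ‖vs‖ ^ 2) := by
    have := abs_inner_le_add_norm v vs ω
    nlinarith [sq_nonneg (‖vs‖ - 1), norm_nonneg vs, mul_nonneg hr.le (sq_nonneg ‖vs‖)]
  have h2 := mul_le_mul_of_nonneg_right h (abs_nonneg ⟪v - vs, (ω : E3)⟫)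
  have h3 := mul_le_mul_of_nonneg_right hk (hpos vs).le
  simp only [dissip, collIntegrand, abs_mul, abs_abs]
  refine h2.trans ?_
  rw [mul_assoc]
  refine mul_le_mul_of_nonneg_left ?_ (Real.sqrt_nonneg _)
  nlinarith

/-- **Renormalization estimate for the collision integral.** For every `r > 0` there is a
constant `C_r > 0` such that for every continuous, strictly positive, rapidly decaying `f`
with `ln f` of polynomial growth,
`∫_{|v|≤r} |C(f)(v)|/√(1+f(v)) dv ≤ C_r (−∫ C(f) ln f dv + ∫ (1+|v|²) f dv)`. -/
theorem collisionIntegral_renormalization_estimate (r : ℝ) (hr : 0 < r) :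
    ∃ C : ℝ, 0 < C ∧
      ∀ f : EuclideanSpace ℝ (Fin 3) → ℝ,
        Continuous f → (∀ v, 0 < f v) → RapidlyDecaying f → LogPolyGrowth f →
        (∫ v in Metric.closedBall (0 : EuclideanSpace ℝ (Fin 3)) r,
            |collisionIntegral f v| / Real.sqrt (1 + f v)) ≤
          C * (-(∫ v, collisionIntegral f v * Real.log (f v)) +
            ∫ v, (1 + ‖v‖ ^ 2) * f v) := by
  set σ := sphereMeasure.real Set.univ with hσ
  set V := (volume : Measure E3).real (Metric.closedBall (0 : E3) r) with hV
  have hσ0 : 0 ≤ σ := measureReal_nonneg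
  have hV0 : 0 ≤ V := measureReal_nonneg
  refine ⟨4 + V * (σ * (r + 1)), by positivity, ?_⟩
  intro f hf hpos hdec hlog
  obtain ⟨hDi, hDe⟩ := dissip_integrable_and_integral hf hpos hdec hlog
  have hMi := integrable_energy hf hpos hdec
  set M := ∫ v, (1 + ‖v‖ ^ 2) * f v with hM
  have hM0 : 0 ≤ M := integral_nonneg fun v => mul_nonneg (by positivity) (hpos v).le
  have hD0 : 0 ≤ ∫ z, dissip f z ∂collMeasure := integral_nonneg (dissip_nonneg hpos)
  unfold collMeasure at hDi hDe hD0
  -- `hKi` and `hJi`: the dissipation integrated over `ω`, and over `ω` and `v*`, is integrable.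
  have hKi := hDi.integral_prod_left
  have hJi := hKi.integral_prod_left
  have hae : ∀ᵐ v : E3, v ∈ Metric.closedBall (0 : E3) r →
      |collisionIntegral f v| / √(1 + f v) ≤
        (∫ vs, ∫ ω, dissip f ((v, vs), ω) ∂sphereMeasure) + σ * (r + 1) * M := by
    filter_upwards [hKi.prod_right_ae, Measure.ae_ae_of_ae_prod hDi.prod_right_ae]
      with v hv1 hv2 hvr
    have hvr' : ‖v‖ ≤ r := mem_closedBall_zero_iff.1 hvr
    have hs : 0 < √(1 + f v) := Real.sqrt_pos.2 (by linarith [hpos v])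
    rw [div_le_iff₀ hs]
    have hbound : ∀ᵐ vs : E3, ‖∫ ω, collIntegrand f ((v, vs), ω) ∂sphereMeasure‖ ≤
        √(1 + f v) * ((∫ ω, dissip f ((v, vs), ω) ∂sphereMeasure)
          + σ * (r + 1) * ((1 + ‖vs‖ ^ 2) * f vs)) := by
      filter_upwards [hv2] with vs hvs
      refine (norm_integral_le_of_norm_le ((hvs.add (integrable_const
        ((r + 1) * ((1 + ‖vs‖ ^ 2) * f vs)))).const_mul (√(1 + f v)))
        (Filter.Eventually.of_forall fun ω => abs_collIntegrand_le hpos hr hvr' vs ω)).trans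
        (le_of_eq ?_)
      simp only [Pi.add_apply]
      rw [integral_const_mul, integral_add hvs (integrable_const _), integral_const, smul_eq_mul]
      ring
    have := norm_integral_le_of_norm_le
      ((hv1.add (hMi.const_mul (σ * (r + 1)))).const_mul (√(1 + f v))) hbound
    refine this.trans (le_of_eq ?_)
    simp only [Pi.add_apply]
    rw [integral_const_mul, integral_add hv1 (hMi.const_mul _), integral_const_mul, mul_comm]
  have hfin : IsFiniteMeasure ((volume : Measure E3).restrict (Metric.closedBall (0 : E3) r)) :=
    ⟨by rw [Measure.restrict_apply_univ]; exact measure_closedBall_lt_top⟩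
  have hmain := integral_mono_of_nonneg
    (μ := (volume : Measure E3).restrict (Metric.closedBall (0 : E3) r))
    (f := fun v => |collisionIntegral f v| / √(1 + f v))
    (Filter.Eventually.of_forall fun v => by positivity)
    (hJi.integrableOn.integrable.add (integrable_const (σ * (r + 1) * M)))
    ((ae_restrict_iff' Metric.isClosed_closedBall.measurableSet).2 hae)
  simp only [Pi.add_apply] at hmain
  rw [integral_add hJi.integrableOn.integrable (integrable_const _), integral_const,
    measureReal_restrict_apply_univ, smul_eq_mul] at hmain
  have hJle := setIntegral_le_integral (s := Metric.closedBall (0 : E3) r) hJi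
    (Filter.Eventually.of_forall fun v => integral_nonneg fun vs =>
      integral_nonneg fun ω => dissip_nonneg hpos _)
  rw [← integral_prod _ hKi, ← integral_prod _ hDi, hDe] at hJle
  rw [hDe] at hD0
  have h5 : 0 ≤ V * (σ * (r + 1)) := by positivity
  set H := ∫ v, collisionIntegral f v * Real.log (f v) with hH
  have h6 : 0 ≤ V * (σ * (r + 1)) * (-H) := mul_nonneg h5 (by linarith)
  refine hmain.trans ?_
  rw [← hV]
  nlinarith

end
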